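/- Let n ≥ 1, let δ > 0, let γ₁, γ₂ > 0 with γ₁ ≠ γ₂, let θ* ∈ ℝⁿ, let φ : ℝ → ℝⁿ be continuous with |φ(s)| ≤ φ_M for all s ∈ [0,δ], where φ_M ≥ 0, exciting on [0,δ] with level η > 0, and let w : ℝ → ℝ be continuous with |w(t)| ≤ W for all t ∈ [0,δ]. Define y(t) = ⟨φ(t), θ*⟩ + w(t). For i = 1,2, let θᵢ : [0,δ] → ℝⁿ solve θᵢ'(t) = −γᵢ(⟨φ(t), θᵢ(t)⟩ − y(t))φ(t) with θ₁(0) = θ₂(0), and let Φᵢ solve Φᵢ'(t) = −γᵢ φ(t)φ(t)ᵀ Φᵢ(t), Φᵢ(0) = I. Assume 0 < φ_M²γ₂δ < 1 and 0 < (1 − 2ηγ₁/(1 + φ_M²γ₁δ)²)(1 + 2γ₂φ_M²δ/(1 − φ_M²γ₂δ)²) < 1, and set κ₁ = √(1 − 2ηγ₁/(1 + φ_M²γ₁δ)²) and κ₂ = √(1 + 2γ₂φ_M²δ/(1 − φ_M²γ₂δ)²). Then Φ₁(δ) − Φ₂(δ) is invertible and, with K₁ = −Φ₂(δ)(Φ₁(δ)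 − Φ₂(δ))⁻¹ and K₂ = I − K₁, one has |K₁θ₁(δ) + K₂θ₂(δ) − θ*| ≤ (γ₁ + γ₂) φ_M δ W / (1 − κ₁κ₂). -/

import Mathlib

open scoped RealInnerProductSpace

section aux
variable {n : ℕ}

lemma aux_vec (γ : ℝ) (p : EuclideanSpace ℝ (Fin n)) (Φ : ℝ → Matrix (Fin n) (Fin n) ℝ) (t : ℝ)
    (h : ∀ i j, HasDerivAt (fun s => Φ s i j)
      ((-γ • (Matrix.vecMulVec p p * Φ t)) i j) t) (v : EuclideanSpace ℝ (Fin n)) :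
    HasDerivAt (fun s => Matrix.toEuclideanCLM (𝕜 := ℝ) (Φ s) v)
      (-(γ * ⟪p, Matrix.toEuclideanCLM (𝕜 := ℝ) (Φ t) v⟫) • p) t := by
  rw [hasDerivAt_iff_hasFDerivAt, ← hasFDerivWithinAt_univ, hasFDerivWithinAt_euclidean]
  intro i
  rw [hasFDerivWithinAt_univ]
  have h1 : HasDerivAt (fun s => ∑ j, Φ s i j * v j)
      (∑ j, ((-γ • (Matrix.vecMulVec p p * Φ t)) i j) * v j) t :=
    HasDerivAt.fun_sum fun j _ => (h i j).mul_const (v j)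
  have h2 : (fun s => (Matrix.toEuclideanCLM (𝕜 := ℝ) (Φ s) v) i) = fun s => ∑ j, Φ s i j * v j := by
    funext s
    rfl
  rw [h2]
  refine h1.hasFDerivAt.congr_fderiv ?_
  ext
  have h3 : ⟪p, Matrix.toEuclideanCLM (𝕜 := ℝ) (Φ t) v⟫ = ∑ k, p k * ∑ j, Φ t k j * v j := by
    rw [PiLp.inner_apply]
    refine Finset.sum_congr rfl fun k _ => ?_
    rw [real_inner_comm]; rfl
  simp only [h3, Matrix.neg_apply, Matrix.smul_apply, neg_smul, Matrix.vecMulVec_mul, Matrix.vecMulVec_apply, Matrix.vecMul, dotProduct]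
  simp [Finset.mul_sum, Finset.sum_mul]
  rw [Finset.sum_comm]
  refine Finset.sum_congr rfl fun k _ => Finset.sum_congr rfl fun j _ => ?_
  ring

lemma aux_energy (δ : ℝ) (hδ : 0 < δ) (γ : ℝ) 
    (φ : ℝ → EuclideanSpace ℝ (Fin n)) (hφc : Continuous φ)
    (x : ℝ → EuclideanSpace ℝ (Fin n))
    (hx : ∀ t ∈ Set.Icc (0 : ℝ) δ, HasDerivAt x (-(γ * ⟪φ t, x t⟫) • φ t) t)
    (t : ℝ) (ht : t ∈ Set.Icc (0 : ℝ) δ) :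
    ‖x t‖ ^ 2 = ‖x 0‖ ^ 2 - 2 * γ * ∫ s in (0:ℝ)..t, ⟪φ s, x s⟫ ^ 2 := by
  have hsub : Set.uIcc 0 t ⊆ Set.Icc 0 δ := by
    rw [Set.uIcc_of_le ht.1]; exact Set.Icc_subset_Icc_right ht.2
  have hxc : ContinuousOn x (Set.uIcc 0 t) := fun s hs =>
    (hx s (hsub hs)).continuousAt.continuousWithinAt
  have hc : ContinuousOn (fun s => ⟪φ s, x s⟫) (Set.uIcc 0 t) :=
    hφc.continuousOn.inner hxc
  have := intervalIntegral.integral_eq_sub_of_hasDerivAt (a := 0) (b := t)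
    (f := fun s => ‖x s‖ ^ 2) (f' := fun s => (-(2 * γ)) * ⟪φ s, x s⟫ ^ 2) (fun s hs => by
      refine (hx s (hsub hs)).norm_sq.congr_deriv ?_
      rw [inner_smul_right, real_inner_comm (φ s) (x s)]; ring) 
      ((continuousOn_const.mul (hc.pow 2)).intervalIntegrable)
  rw [intervalIntegral.integral_const_mul] at this
  linarith

lemma aux_disp (δ : ℝ) (hδ : 0 < δ) (γ : ℝ) (hγ : 0 < γ) (φM : ℝ)
    (φ : ℝ → EuclideanSpace ℝ (Fin n)) (hφc : Continuous φ)
    (hbound : ∀ s ∈ Set.Icc (0 : ℝ) δ, ‖φ s‖ ≤ φM)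
    (x : ℝ → EuclideanSpace ℝ (Fin n))
    (hx : ∀ t ∈ Set.Icc (0 : ℝ) δ, HasDerivAt x (-(γ * ⟪φ t, x t⟫) • φ t) t)
    (t : ℝ) (ht : t ∈ Set.Icc (0 : ℝ) δ) :
    ‖x t - x 0‖ ≤ γ * φM * ∫ s in (0:ℝ)..δ, |⟪φ s, x s⟫| := by
  have hxc : ContinuousOn x (Set.Icc 0 δ) := fun s hs =>
    (hx s hs).continuousAt.continuousWithinAt
  have hc : ContinuousOn (fun s => ⟪φ s, x s⟫) (Set.Icc 0 δ) :=
    hφc.continuousOn.inner hxc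
  have hsub : Set.uIcc 0 t ⊆ Set.Icc 0 δ := by
    rw [Set.uIcc_of_le ht.1]; exact Set.Icc_subset_Icc_right ht.2
  have hM : 0 ≤ φM := (norm_nonneg _).trans (hbound 0 ⟨le_rfl, hδ.le⟩)
  have h1 := intervalIntegral.integral_eq_sub_of_hasDerivAt (a := 0) (b := t)
    (fun s hs => hx s (hsub hs)) 
      (((continuousOn_const.mul (hc.mono hsub)).neg.smul hφc.continuousOn).intervalIntegrable)
  rw [← h1, ← intervalIntegral.integral_const_mul]
  have hci : ContinuousOn (fun s => γ * φM * |⟪φ s, x s⟫|) (Set.Icc 0 δ) :=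
    continuousOn_const.mul hc.abs
  refine (intervalIntegral.norm_integral_le_of_norm_le (g := fun s => γ * φM * |⟪φ s, x s⟫|) ht.1
    ?_ (hci.mono hsub).intervalIntegrable).trans ?_
  · refine Filter.Eventually.of_forall fun s hs => ?_
    have hs' : s ∈ Set.Icc 0 δ := ⟨hs.1.le, hs.2.trans ht.2⟩
    rw [norm_smul, Real.norm_eq_abs, abs_neg, abs_mul, abs_of_pos hγ]
    have := mul_le_mul_of_nonneg_left (hbound s hs') (by positivity : 0 ≤ γ * |⟪φ s, x s⟫|)
    linarith
  · refine intervalIntegral.integral_mono_interval le_rfl ht.1 ht.2 ?_ ?_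
    · exact Filter.Eventually.of_forall fun s => by positivity
    · rw [← Set.uIcc_of_le hδ.le] at hci
      exact hci.intervalIntegrable

lemma aux_CS (δ : ℝ) (hδ : 0 < δ) (f : ℝ → ℝ) (hf : ContinuousOn f (Set.uIcc 0 δ)) :
    (∫ s in (0:ℝ)..δ, f s) ^ 2 ≤ δ * ∫ s in (0:ℝ)..δ, f s ^ 2 := by
  set c := ∫ s in (0:ℝ)..δ, f s with hc
  have i1 := hf.intervalIntegrable (μ := MeasureTheory.volume)
  have i2 : IntervalIntegrable (fun s => f s ^ 2) MeasureTheory.volume 0 δ :=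
    (hf.pow 2).intervalIntegrable
  have h : 0 ≤ ∫ s in (0:ℝ)..δ, (f s ^ 2 - 2 * (c / δ) * f s + (c/δ) ^ 2) := by
    refine intervalIntegral.integral_nonneg hδ.le fun s _ => ?_
    nlinarith [sq_nonneg (f s - c / δ)]
  rw [intervalIntegral.integral_add (i2.sub (i1.const_mul _)) intervalIntegrable_const,
    intervalIntegral.integral_sub i2 (i1.const_mul _), intervalIntegral.integral_const_mul,
    intervalIntegral.integral_const, ← hc] at h
  have h2 := mul_nonneg hδ.le h
  have : δ * ((∫ s in (0:ℝ)..δ, f s ^ 2) - 2 * (c / δ) * c + (δ - 0) • (c/δ)^2) =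
     δ * (∫ s in (0:ℝ)..δ, f s ^ 2) - c ^ 2 := by
    simp only [smul_eq_mul]
    field_simp; ring
  linarith

lemma aux_lower (δ : ℝ) (hδ : 0 < δ) (γ : ℝ) (hγ : 0 < γ) (φM η : ℝ)
    (φ : ℝ → EuclideanSpace ℝ (Fin n)) (hφc : Continuous φ)
    (hbound : ∀ s ∈ Set.Icc (0 : ℝ) δ, ‖φ s‖ ≤ φM)
    (hexc : ∀ v : EuclideanSpace ℝ (Fin n), η * ‖v‖ ^ 2 ≤ ∫ s in (0:ℝ)..δ, ⟪φ s, v⟫ ^ 2)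
    (x : ℝ → EuclideanSpace ℝ (Fin n))
    (hx : ∀ t ∈ Set.Icc (0 : ℝ) δ, HasDerivAt x (-(γ * ⟪φ t, x t⟫) • φ t) t) :
    ‖x δ‖ ^ 2 ≤ (1 - 2 * η * γ / (1 + φM ^ 2 * γ * δ) ^ 2) * ‖x 0‖ ^ 2 := by
  have hM : 0 ≤ φM := (norm_nonneg _).trans (hbound 0 ⟨le_rfl, hδ.le⟩)
  rw [aux_energy δ hδ γ φ hφc x hx δ ⟨hδ.le, le_rfl⟩]
  have hxc : ContinuousOn x (Set.uIcc 0 δ) := fun s hs =>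
    (hx s (by rwa [Set.uIcc_of_le hδ.le] at hs)).continuousAt.continuousWithinAt
  have hc : ContinuousOn (fun s => ⟪φ s, x s⟫) (Set.uIcc 0 δ) :=
    hφc.continuousOn.inner hxc
  have hCS := aux_CS δ hδ _ hc.abs
  simp only [sq_abs] at hCS
  have hd := aux_disp δ hδ γ hγ φM φ hφc hbound x hx
  set c := ∫ s in (0:ℝ)..δ, |⟪φ s, x s⟫| with hcdef
  set b := ∫ s in (0:ℝ)..δ, ⟪φ s, x s⟫ ^ 2 with hbdef
  have i1 := hc.abs.intervalIntegrable (μ := MeasureTheory.volume)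
  have i2 : IntervalIntegrable (fun s => ⟪φ s, x s⟫ ^ 2) MeasureTheory.volume 0 δ :=
    (hc.pow 2).intervalIntegrable
  set q := γ * φM ^ 2 with hq
  have hq0 : 0 ≤ q := by positivity
  have h1 : (∫ s in (0:ℝ)..δ, ⟪φ s, x 0⟫ ^ 2) ≤
      ∫ s in (0:ℝ)..δ, (⟪φ s, x s⟫ ^ 2 + 2 * q * c * |⟪φ s, x s⟫| + (q * c) ^ 2) := by
    refine intervalIntegral.integral_mono_on hδ.le ?_ ((i2.add (i1.const_mul _)).add intervalIntegrable_const) ?_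
    · exact ((hφc.inner continuous_const).pow 2).intervalIntegrable _ _
    · intro s hs
      have e : ⟪φ s, x 0⟫ = ⟪φ s, x s⟫ - ⟪φ s, x s - x 0⟫ := by
        rw [inner_sub_right]; ring
      have e2 : |⟪φ s, x s - x 0⟫| ≤ q * c := by
        refine (abs_real_inner_le_norm _ _).trans ?_
        refine (mul_le_mul (hbound s hs) (hd s hs) (norm_nonneg _) hM).trans (le_of_eq ?_)
        rw [hq]; ring
      have e3 : |⟪φ s, x 0⟫| ≤ |⟪φ s, x s⟫| + q * c := by
        rw [e]; exact (abs_sub _ _).trans (by linarith)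
      have e4 := pow_le_pow_left₀ (abs_nonneg _) e3 2
      rw [sq_abs] at e4
      have e5 := sq_abs ⟪φ s, x s⟫
      nlinarith
  rw [intervalIntegral.integral_add (i2.add (i1.const_mul _)) intervalIntegrable_const,
    intervalIntegral.integral_add i2 (i1.const_mul _), intervalIntegral.integral_const_mul,
    intervalIntegral.integral_const, ← hcdef, ← hbdef, smul_eq_mul, sub_zero] at h1
  have h2 := (hexc (x 0)).trans h1
  have h3 : η * ‖x 0‖ ^ 2 ≤ (1 + φM ^ 2 * γ * δ) ^ 2 * b := by
    have a1 := mul_le_mul_of_nonneg_left hCS (by positivity : 0 ≤ 2 * q)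
    have a2 := mul_le_mul_of_nonneg_left hCS (by positivity : 0 ≤ q ^ 2 * δ)
    have : (1 + φM ^ 2 * γ * δ) = 1 + q * δ := by rw [hq]; ring
    rw [this]
    nlinarith
  have h4 : η * ‖x 0‖ ^ 2 / (1 + φM ^ 2 * γ * δ) ^ 2 ≤ b := by
    rw [div_le_iff₀ (by positivity)]; linarith
  have h5 := mul_le_mul_of_nonneg_left h4 (by positivity : 0 ≤ 2 * γ)
  have : (1 - 2 * η * γ / (1 + φM ^ 2 * γ * δ) ^ 2) * ‖x 0‖ ^ 2 = ‖x 0‖ ^ 2 -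
     2 * γ * (η * ‖x 0‖ ^ 2 / (1 + φM ^ 2 * γ * δ) ^ 2) := by ring
  linarith

lemma aux_upper (δ : ℝ) (hδ : 0 < δ) (γ : ℝ) (hγ : 0 < γ) (φM : ℝ)
    (φ : ℝ → EuclideanSpace ℝ (Fin n)) (hφc : Continuous φ)
    (hbound : ∀ s ∈ Set.Icc (0 : ℝ) δ, ‖φ s‖ ≤ φM)
    (h7 : φM ^ 2 * γ * δ < 1)
    (x : ℝ → EuclideanSpace ℝ (Fin n))
    (hx : ∀ t ∈ Set.Icc (0 : ℝ) δ, HasDerivAt x (-(γ * ⟪φ t, x t⟫) • φ t) t) :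
    ‖x 0‖ ^ 2 ≤ (1 + 2 * γ * φM ^ 2 * δ / (1 - φM ^ 2 * γ * δ) ^ 2) * ‖x δ‖ ^ 2 := by
  have hM : 0 ≤ φM := (norm_nonneg _).trans (hbound 0 ⟨le_rfl, hδ.le⟩)
  have hxc : ContinuousOn x (Set.uIcc 0 δ) := fun s hs =>
    (hx s (by rwa [Set.uIcc_of_le hδ.le] at hs)).continuousAt.continuousWithinAt
  have hc : ContinuousOn (fun s => ⟪φ s, x s⟫) (Set.uIcc 0 δ) :=
    hφc.continuousOn.inner hxc
  have hdec : ∀ t ∈ Set.Icc (0 : ℝ) δ, ‖x t‖ ≤ ‖x 0‖ := by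
    intro t ht
    have := aux_energy δ hδ γ φ hφc x hx t ht
    have h0 : 0 ≤ ∫ s in (0:ℝ)..t, ⟪φ s, x s⟫ ^ 2 :=
      intervalIntegral.integral_nonneg ht.1 fun s _ => sq_nonneg _
    have : 0 ≤ 2 * γ * ∫ s in (0:ℝ)..t, ⟪φ s, x s⟫ ^ 2 := by positivity
    exact le_of_sq_le_sq (by linarith) (norm_nonneg _)
  have hin : ∀ t ∈ Set.Icc (0 : ℝ) δ, |⟪φ t, x t⟫| ≤ φM * ‖x 0‖ := fun t ht =>
    (abs_real_inner_le_norm _ _).trans (mul_le_mul (hbound t ht) (hdec t ht) (norm_nonneg _) hM)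
  have hc1 : (∫ s in (0:ℝ)..δ, |⟪φ s, x s⟫|) ≤ δ * (φM * ‖x 0‖) := by
    have := intervalIntegral.integral_mono_on (μ := MeasureTheory.volume) hδ.le hc.abs.intervalIntegrable
      (g := fun _ => φM * ‖x 0‖) intervalIntegrable_const hin
    rw [intervalIntegral.integral_const, smul_eq_mul, sub_zero] at this
    exact this
  have hd := aux_disp δ hδ γ hγ φM φ hφc hbound x hx δ ⟨hδ.le, le_rfl⟩
  have hd2 := hd.trans (mul_le_mul_of_nonneg_left hc1 (by positivity))
  have hd3 : ‖x 0‖ - ‖x δ‖ ≤ ‖x δ - x 0‖ := by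
    rw [norm_sub_rev]; exact norm_sub_norm_le _ _
  have hp : 0 < 1 - φM ^ 2 * γ * δ := by linarith
  have hx0 : ‖x 0‖ ≤ ‖x δ‖ / (1 - φM ^ 2 * γ * δ) := by
    rw [le_div_iff₀ hp]; nlinarith
  have hx02 := pow_le_pow_left₀ (norm_nonneg _) hx0 2
  have hb : (∫ s in (0:ℝ)..δ, ⟪φ s, x s⟫ ^ 2) ≤ δ * (φM * ‖x 0‖) ^ 2 := by
    have := intervalIntegral.integral_mono_on (μ := MeasureTheory.volume) hδ.le
      (f := fun s => ⟪φ s, x s⟫ ^ 2)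
      (hc.pow 2).intervalIntegrable
      (g := fun _ => (φM * ‖x 0‖) ^ 2) intervalIntegrable_const (fun t ht => by
        simpa using pow_le_pow_left₀ (abs_nonneg _) (hin t ht) 2)
    rw [intervalIntegral.integral_const, smul_eq_mul, sub_zero] at this
    exact this
  have hE := aux_energy δ hδ γ φ hφc x hx δ ⟨hδ.le, le_rfl⟩
  have e1 := mul_le_mul_of_nonneg_left hb (by positivity : 0 ≤ 2 * γ)
  have e2 := mul_le_mul_of_nonneg_left hx02 (by positivity : 0 ≤ 2 * γ * δ * φM ^ 2)
  have e3 : (1 + 2 * γ * φM ^ 2 * δ / (1 - φM ^ 2 * γ * δ) ^ 2) * ‖x δ‖ ^ 2 =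
    ‖x δ‖ ^ 2 + 2 * γ * δ * φM ^ 2 * (‖x δ‖ / (1 - φM ^ 2 * γ * δ)) ^ 2 := by
    rw [div_pow]; ring
  rw [e3]
  nlinarith

lemma aux_noise (δ : ℝ) (hδ : 0 < δ) (γ : ℝ) (hγ : 0 < γ) (φM : ℝ)
    (φ : ℝ → EuclideanSpace ℝ (Fin n))
    (hbound : ∀ s ∈ Set.Icc (0 : ℝ) δ, ‖φ s‖ ≤ φM)
    (w : ℝ → ℝ) (W : ℝ) (hW : ∀ t ∈ Set.Icc (0 : ℝ) δ, |w t| ≤ W)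
    (x : ℝ → EuclideanSpace ℝ (Fin n)) (hx0 : x 0 = 0)
    (hx : ∀ t ∈ Set.Icc (0 : ℝ) δ, HasDerivAt x (-(γ * (⟪φ t, x t⟫ - w t)) • φ t) t) :
    ‖x δ‖ ≤ γ * φM * δ * W := by
  have hM : 0 ≤ φM := (norm_nonneg _).trans (hbound 0 ⟨le_rfl, hδ.le⟩)
  have hW0 : 0 ≤ W := (abs_nonneg _).trans (hW 0 ⟨le_rfl, hδ.le⟩)
  set c := γ * φM * W with hc
  have hc0 : 0 ≤ c := by positivity
  have key : ∀ ε > 0, ‖x δ‖ ≤ ε + (c + ε) * δ := by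
    intro ε hε
    have := image_le_of_deriv_right_lt_deriv_boundary (a := 0) (b := δ)
      (f := fun t => ‖x t‖ ^ 2) (f' := fun t => 2 * ⟪x t, -(γ * (⟪φ t, x t⟫ - w t)) • φ t⟫)
      (fun t ht => ((hx t ht).norm_sq).continuousAt.continuousWithinAt)
      (fun t ht => ((hx t ⟨ht.1, ht.2.le⟩).norm_sq).hasDerivWithinAt)
      (B := fun t => (ε + (c + ε) * t) ^ 2) (B' := fun t => 2 * (ε + (c + ε) * t) * (c + ε))
      (by simp [hx0]; positivity)
      (fun t => by
        have h := ((((hasDerivAt_id t).const_mul (c + ε)).const_add ε).pow 2)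
        refine h.congr_deriv ?_
        simp)
      (fun t ht heq => by
        have ht' : t ∈ Set.Icc 0 δ := ⟨ht.1, ht.2.le⟩
        have hr : 0 < ε + (c + ε) * t := by
          have := mul_nonneg (by linarith : 0 ≤ c + ε) ht.1
          linarith
        have hn : ‖x t‖ = ε + (c + ε) * t :=
          (pow_left_inj₀ (norm_nonneg _) hr.le two_ne_zero).1 heq
        rw [inner_smul_right, real_inner_comm (φ t) (x t)]
        have h1 : w t * ⟪φ t, x t⟫ ≤ W * (φM * ‖x t‖) := by
          refine (le_abs_self _).trans ?_
          rw [abs_mul]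
          exact mul_le_mul (hW t ht') ((abs_real_inner_le_norm _ _).trans
            (mul_le_mul_of_nonneg_right (hbound t ht') (norm_nonneg _))) (abs_nonneg _) hW0
        have h2 := mul_le_mul_of_nonneg_left h1 hγ.le
        have h3 : γ * (W * (φM * ‖x t‖)) = c * (ε + (c + ε) * t) := by
          rw [hn, hc]; ring
        have h4 := mul_pos hr hε
        have h5 : 0 ≤ γ * ⟪φ t, x t⟫ ^ 2 := by positivity
        nlinarith)
      (show δ ∈ Set.Icc 0 δ from ⟨hδ.le, le_rfl⟩)
    exact le_of_sq_le_sq this (by positivity)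
  refine le_of_forall_pos_le_add fun ε hε => ?_
  have := key (ε / (1 + δ)) (by positivity)
  have e : ε / (1 + δ) + (c + ε / (1 + δ)) * δ = γ * φM * δ * W + ε := by
    rw [hc]; field_simp; ring
  linarith

end aux


/-- Explicit error bound for the hybrid reset at the first jump
under bounded measurement noise and interval excitation. -/
theorem stmt16 (n : ℕ) (hn : 1 ≤ n) (δ : ℝ) (hδ : 0 < δ)
    (γ₁ γ₂ : ℝ) (hγ₁ : 0 < γ₁) (hγ₂ : 0 < γ₂) (hγ : γ₁ ≠ γ₂)
    (θs : EuclideanSpace ℝ (Fin n))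
    (φM : ℝ) (hφM : 0 ≤ φM) (η : ℝ) (hη : 0 < η)
    (φ : ℝ → EuclideanSpace ℝ (Fin n)) (hφc : Continuous φ)
    (hbound : ∀ s ∈ Set.Icc (0 : ℝ) δ, ‖φ s‖ ≤ φM)
    (hexc : ∀ v : EuclideanSpace ℝ (Fin n), η * ‖v‖ ^ 2 ≤ ∫ s in (0:ℝ)..δ, ⟪φ s, v⟫ ^ 2)
    (w : ℝ → ℝ) (hw : Continuous w)
    (W : ℝ) (hW : ∀ t ∈ Set.Icc (0 : ℝ) δ, |w t| ≤ W)
    (y : ℝ → ℝ) (hy : ∀ t, y t = ⟪φ t, θs⟫ + w t)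
    (θ₁ θ₂ : ℝ → EuclideanSpace ℝ (Fin n))
    (hθ₁ : ∀ t ∈ Set.Icc (0 : ℝ) δ,
      HasDerivAt θ₁ (-(γ₁ * (⟪φ t, θ₁ t⟫ - y t)) • φ t) t)
    (hθ₂ : ∀ t ∈ Set.Icc (0 : ℝ) δ,
      HasDerivAt θ₂ (-(γ₂ * (⟪φ t, θ₂ t⟫ - y t)) • φ t) t)
    (hθ0 : θ₁ 0 = θ₂ 0)
    (Φ₁ Φ₂ : ℝ → Matrix (Fin n) (Fin n) ℝ)
    (hΦ₁0 : Φ₁ 0 = 1) (hΦ₂0 : Φ₂ 0 = 1)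
    (hΦ₁ : ∀ t ∈ Set.Icc (0 : ℝ) δ, ∀ i j, HasDerivAt (fun s => Φ₁ s i j)
      ((-γ₁ • (Matrix.vecMulVec (φ t) (φ t) * Φ₁ t)) i j) t)
    (hΦ₂ : ∀ t ∈ Set.Icc (0 : ℝ) δ, ∀ i j, HasDerivAt (fun s => Φ₂ s i j)
      ((-γ₂ • (Matrix.vecMulVec (φ t) (φ t) * Φ₂ t)) i j) t)
    (h7 : 0 < φM ^ 2 * γ₂ * δ) (h7' : φM ^ 2 * γ₂ * δ < 1)
    (h8 : 0 < (1 - 2 * η * γ₁ / (1 + φM ^ 2 * γ₁ * δ) ^ 2) *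
      (1 + 2 * γ₂ * φM ^ 2 * δ / (1 - φM ^ 2 * γ₂ * δ) ^ 2))
    (h8' : (1 - 2 * η * γ₁ / (1 + φM ^ 2 * γ₁ * δ) ^ 2) *
      (1 + 2 * γ₂ * φM ^ 2 * δ / (1 - φM ^ 2 * γ₂ * δ) ^ 2) < 1)
    (κ₁ κ₂ : ℝ)
    (hκ₁ : κ₁ = Real.sqrt (1 - 2 * η * γ₁ / (1 + φM ^ 2 * γ₁ * δ) ^ 2))
    (hκ₂ : κ₂ = Real.sqrt (1 + 2 * γ₂ * φM ^ 2 * δ / (1 - φM ^ 2 * γ₂ * δ) ^ 2)) :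
    IsUnit (Φ₁ δ - Φ₂ δ) ∧
      ∀ K₁ K₂ : Matrix (Fin n) (Fin n) ℝ,
        K₁ = -(Φ₂ δ * (Φ₁ δ - Φ₂ δ)⁻¹) → K₂ = 1 - K₁ →
        ‖Matrix.toEuclideanCLM (𝕜 := ℝ) K₁ (θ₁ δ) +
            Matrix.toEuclideanCLM (𝕜 := ℝ) K₂ (θ₂ δ) - θs‖ ≤
          (γ₁ + γ₂) * φM * δ * W / (1 - κ₁ * κ₂) := by
  have hM := hφM
  have hvec₁ := fun v => aux_lower δ hδ γ₁ hγ₁ φM η φ hφc hbound hexc _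
    (fun t ht => aux_vec γ₁ (φ t) Φ₁ t (hΦ₁ t ht) v)
  have hvec₂ := fun v => aux_upper δ hδ γ₂ hγ₂ φM φ hφc hbound h7' _
    (fun t ht => aux_vec γ₂ (φ t) Φ₂ t (hΦ₂ t ht) v)
  simp only [hΦ₁0, hΦ₂0, map_one, ContinuousLinearMap.one_apply] at hvec₁ hvec₂
  have hf2 : 0 < 1 + 2 * γ₂ * φM ^ 2 * δ / (1 - φM ^ 2 * γ₂ * δ) ^ 2 := by positivity
  have hf1 : 0 < 1 - 2 * η * γ₁ / (1 + φM ^ 2 * γ₁ * δ) ^ 2 := pos_of_mul_pos_left h8 hf2.le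
  have hk1 : 0 ≤ κ₁ := hκ₁ ▸ Real.sqrt_nonneg _
  have hk2 : 0 ≤ κ₂ := hκ₂ ▸ Real.sqrt_nonneg _
  have hk1s : κ₁ ^ 2 = 1 - 2 * η * γ₁ / (1 + φM ^ 2 * γ₁ * δ) ^ 2 := by
    rw [hκ₁, Real.sq_sqrt hf1.le]
  have hk2s : κ₂ ^ 2 = 1 + 2 * γ₂ * φM ^ 2 * δ / (1 - φM ^ 2 * γ₂ * δ) ^ 2 := by
    rw [hκ₂, Real.sq_sqrt hf2.le]
  rw [← hk1s, ← hk2s] at h8'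
  rw [← hk1s] at hvec₁
  rw [← hk2s] at hvec₂
  have hkk : κ₁ * κ₂ < 1 := by
    rw [← mul_pow] at h8'
    exact (sq_lt_one_iff₀ (by positivity)).1 h8'
  set A := Matrix.toEuclideanCLM (𝕜 := ℝ) (Φ₁ δ) with hA
  set B := Matrix.toEuclideanCLM (𝕜 := ℝ) (Φ₂ δ) with hB
  have hAv : ∀ v, ‖A v‖ ≤ κ₁ * ‖v‖ := fun v =>
    le_of_sq_le_sq (by rw [mul_pow]; exact hvec₁ v) (by positivity)
  have hBv : ∀ v, ‖v‖ ≤ κ₂ * ‖B v‖ := fun v =>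
    le_of_sq_le_sq (by rw [mul_pow]; exact hvec₂ v) (by positivity)
  have hAB : ∀ v, ‖A v‖ ≤ κ₁ * κ₂ * ‖B v‖ := fun v => by
    have := mul_le_mul_of_nonneg_left (hBv v) hk1
    have := hAv v
    linarith
  have hunit : IsUnit (Φ₁ δ - Φ₂ δ) := by
    rw [← Matrix.mulVec_injective_iff_isUnit]
    rw [← Matrix.coe_mulVecLin, ← LinearMap.ker_eq_bot, LinearMap.ker_eq_bot']
    intro v hv
    have e1 : Matrix.toEuclideanCLM (𝕜 := ℝ) (Φ₁ δ - Φ₂ δ) (WithLp.toLp 2 v) = 0 := by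
      rw [Matrix.toEuclideanCLM_toLp]
      rw [Matrix.mulVecLin_apply] at hv
      rw [hv]; rfl
    rw [map_sub, ContinuousLinearMap.sub_apply, sub_eq_zero] at e1
    have e2 := hAB (WithLp.toLp 2 v)
    have e3 := hBv (WithLp.toLp 2 v)
    rw [hA, e1, ← hB] at e2
    have e4 : ‖B (WithLp.toLp 2 v)‖ = 0 := by
      have := norm_nonneg (B (WithLp.toLp 2 v))
      nlinarith
    rw [e4, mul_zero] at e3
    have e5 : (WithLp.toLp 2 v : EuclideanSpace ℝ (Fin n)) = 0 := norm_le_zero_iff.1 e3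
    exact congrArg WithLp.ofLp e5
  refine ⟨hunit, ?_⟩
  intro K₁ K₂ hK₁ hK₂
  have hν : ∀ (γ : ℝ), 0 < γ → ∀ θ : ℝ → EuclideanSpace ℝ (Fin n),
      ∀ Φ : ℝ → Matrix (Fin n) (Fin n) ℝ, Φ 0 = 1 →
      (∀ t ∈ Set.Icc (0 : ℝ) δ, HasDerivAt θ (-(γ * (⟪φ t, θ t⟫ - y t)) • φ t) t) →
      (∀ t ∈ Set.Icc (0 : ℝ) δ, ∀ i j, HasDerivAt (fun s => Φ s i j)
        ((-γ • (Matrix.vecMulVec (φ t) (φ t) * Φ t)) i j) t) →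
      ‖(θ δ - θs) - Matrix.toEuclideanCLM (𝕜 := ℝ) (Φ δ) (θ 0 - θs)‖ ≤ γ * φM * δ * W := by
    intro γ hγ θ Φ hΦ0 hθ hΦ
    refine aux_noise δ hδ γ hγ φM φ hbound w W hW
      (fun t => (θ t - θs) - Matrix.toEuclideanCLM (𝕜 := ℝ) (Φ t) (θ 0 - θs)) ?_ ?_
    · simp [hΦ0]
    · intro t ht
      refine (((hθ t ht).sub_const θs).sub
        (aux_vec γ (φ t) Φ t (hΦ t ht) (θ 0 - θs))).congr_deriv ?_
      rw [← sub_smul, hy t]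
      congr 1
      simp only [inner_sub_right]
      ring
  have hν₁ := hν γ₁ hγ₁ θ₁ Φ₁ hΦ₁0 hθ₁ hΦ₁
  have hν₂ := hν γ₂ hγ₂ θ₂ Φ₂ hΦ₂0 hθ₂ hΦ₂
  rw [← hθ0, ← hB] at hν₂
  rw [← hA] at hν₁
  set e0 := θ₁ 0 - θs with he0
  set ν₁ := (θ₁ δ - θs) - A e0 with hν₁d
  set ν₂ := (θ₂ δ - θs) - B e0 with hν₂d
  have hdet : IsUnit (Φ₁ δ - Φ₂ δ).det := (Matrix.isUnit_iff_isUnit_det _).1 hunit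
  set C := Matrix.toEuclideanCLM (𝕜 := ℝ) (Φ₁ δ - Φ₂ δ)⁻¹ with hC
  have hABC : (A - B) * C = 1 := by
    rw [hA, hB, hC, ← map_sub, ← map_mul, Matrix.mul_nonsing_inv _ hdet, map_one]
  have hCAB : C * (A - B) = 1 := by
    rw [hA, hB, hC, ← map_sub, ← map_mul, Matrix.nonsing_inv_mul _ hdet, map_one]
  have hC1 : ∀ v, A (C v) - B (C v) = v := fun v => by
    have := congrArg (fun L => L v) hABC
    simpa using this
  have hC2 : ∀ v, C (A v - B v) = v := fun v => by
    have := congrArg (fun L => L v) hCAB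
    simpa using this
  have hK1v : ∀ v, Matrix.toEuclideanCLM (𝕜 := ℝ) K₁ v = - B (C v) := fun v => by
    rw [hK₁, map_neg, map_mul]; rfl
  have hK2v : ∀ v, Matrix.toEuclideanCLM (𝕜 := ℝ) K₂ v = A (C v) := fun v => by
    rw [hK₂, map_sub, map_one, ContinuousLinearMap.sub_apply, hK1v,
      ContinuousLinearMap.one_apply]
    nth_rewrite 1 [← hC1 v]
    abel
  have hden : 0 < 1 - κ₁ * κ₂ := by linarith
  have hq : ∀ v, ‖B (C v)‖ ≤ ‖v‖ / (1 - κ₁ * κ₂) := fun v => by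
    rw [le_div_iff₀ hden]
    have h1 := hAB (C v)
    have h2 : ‖B (C v)‖ - ‖A (C v)‖ ≤ ‖v‖ := by
      have := norm_sub_norm_le (B (C v)) (A (C v))
      rwa [norm_sub_rev, hC1] at this
    linarith
  have hq2 : ∀ v, ‖A (C v)‖ ≤ ‖v‖ / (1 - κ₁ * κ₂) := fun v => by
    refine ((hAB (C v)).trans ?_).trans (hq v)
    have := mul_le_mul_of_nonneg_right hkk.le (norm_nonneg (B (C v)))
    linarith
  rw [hK1v, hK2v]
  have hfinal : -B (C (θ₁ δ)) + A (C (θ₂ δ)) - θs = -B (C ν₁) + A (C ν₂) := by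
    have t1 : θ₁ δ = ν₁ + θs + A e0 := by rw [hν₁d]; abel
    have t2 : θ₂ δ = ν₂ + θs + B e0 := by rw [hν₂d]; abel
    rw [t1, t2]
    have c1 := hC1 θs
    have c2 : B (C (A e0)) = A (C (B e0)) := by
      have d1 := hC1 (B e0)
      have d2 := hC2 e0
      rw [map_sub, sub_eq_iff_eq_add] at d2
      rw [d2, map_add, ← sub_eq_zero]
      nth_rewrite 1 [← d1]
      abel
    simp only [map_add, c2]
    nth_rewrite 3 [← c1]
    abel
  rw [hfinal]
  refine (norm_add_le _ _).trans ?_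
  rw [norm_neg]
  have f1 : ‖ν₁‖ / (1 - κ₁ * κ₂) ≤ γ₁ * φM * δ * W / (1 - κ₁ * κ₂) := by gcongr
  have f2 : ‖ν₂‖ / (1 - κ₁ * κ₂) ≤ γ₂ * φM * δ * W / (1 - κ₁ * κ₂) := by gcongr
  have f3 : (γ₁ + γ₂) * φM * δ * W / (1 - κ₁ * κ₂) = γ₁ * φM * δ * W / (1 - κ₁ * κ₂) +
    γ₂ * φM * δ * W / (1 - κ₁ * κ₂) := by ring
  rw [f3]
  exact add_le_add ((hq _).trans f1) ((hq2 _).trans f2)
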